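/- Programs are finite binary words, $|p|$ denotes the length of $p\in\{0,1\}^*$, and for $f,g:\mathbb N\to\mathbb N$ we write $f=_{\rm ct}g$ if there is a constant $c$ with $|f(n)-g(n)|\le c$ for all $n$. Let $\varphi_e$ be the partial recursive function $\mathbb N\rightharpoonup\mathbb N$ with Gödel number $e$, and let $\emptyset'=\{e:\varphi_e(e)\text{ converges}\}$. Let $PR(\mathbb N^2\to\mathbb N)$ be the set of partial recursive functions $\mathbb N^2\rightharpoonup\mathbb N$. A map $G:\{0,1\}^*\to PR(\mathbb N^2\to\mathbb N)$ is called effective if some total recursive function maps each $p$ to a Gödel number of $G(p)$. Let $U:\{0,1\}^*\to PR(\mathbb N^2\to\mathbb N)$ be strongly universal, i.e. $U$ is effective and there is a total recursive ${\tt comp}:\{0,1\}^*\times\{0,1\}^*\to\{0,1\}^*$ such that the maps $p\mapsto U({\tt comp}(e,p))$, $e\in\{0,1\}^*$, are exactly the effective maps $\{0,1\}^*\to PR(\mathbb N^2\to\mathbb N)$, and for each $e$ there is a constant $c(e)$ with $|{\tt comp}(e,p)|\le|p|+c(e)$ for all $p$. For $f\in PR(\mathbb N^2\to\mathbb N)$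 regard the domain of $f$ as a binary relation on $\mathbb N$, and let $\preceq_f$ be its reflexive–transitive closure on the set of integers occurring in pairs of this domain; the quotient order associated to $f$ is the quotient of $\preceq_f$ by the equivalence $x\preceq_f y\wedge y\preceq_f x$. Put $$K_{\rm ord}(n)=\min\{|p| : \text{the quotient order associated to } U(p) \text{ is a finite linear order with exactly } n \text{ elements}\}.$$ Let $V:\{0,1\}^*\times\mathbb N\rightharpoonup\mathbb N$ be strongly universal among the functions partial recursive in $\emptyset'$, i.e. $V$ is partial recursive in $\emptyset'$ and there is ${\tt comp}':\{0,1\}^*\times\{0,1\}^*\to\{0,1\}^*$, recursive in $\emptyset'$, such that the functions $(p,t)\mapsto V({\tt comp}'(e,p),t)$, $e\in\{0,1\}^*$, are exactly the functions $\{0,1\}^*\times\mathbb N\rightharpoonup\mathbb N$ partial recursive in $\emptyset'$, and for each $e$ there is a constant $c'(e)$ with $|{\tt comp}'(e,p)|\le|p|+c'(e)$ for all $p$. Reading convergence of $V(p,t)$ as "program $p$, with oracle $\emptyset'$, emits a symbol $1$ at step $t$ of its possibly infinite computation", put $$K'^{\infty}(n)=\min\{|p| : \{t : V(p,t)\text{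 converges}\} \text{ is finite with exactly } n \text{ elements}\}.$$ Then $K_{\rm ord}=_{\rm ct}K'^{\infty}$: the Kolmogorov complexity of the effective ordinal representation coincides, up to an additive constant, with Kolmogorov complexity allowing both the oracle $\emptyset'$ and possibly infinite computations with unary output. -/

import Mathlib

/-- Programs: finite binary words. -/
abbrev Word : Type := List Bool

/-- `f =ct g` : there is a constant `c` with `|f(n) − g(n)| ≤ c` for all `n`. -/
def EqCt (f g : ℕ → ℕ) : Prop := ∃ c : ℕ, ∀ n : ℕ, |(f n : ℤ) - (g n : ℤ)| ≤ (c : ℤ)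

/-- `φ_e`, the partial recursive function `ℕ ⇀ ℕ` with Gödel number `e`. -/
def phi (e : ℕ) : ℕ →. ℕ := (Denumerable.ofNat Nat.Partrec.Code e).eval

/-- The set `PR(ℕ²→ℕ)` of partial recursive functions `ℕ² ⇀ ℕ`. -/
def PRFun2 : Type := {f : ℕ × ℕ →. ℕ // Partrec f}

/-- A map `G : {0,1}* → PR(ℕ²→ℕ)` is partial-recursively given: some total recursive
function sends each program `p` to a Gödel number of `G p` (pairs of integers are coded
by the recursive pairing `Nat.pair`). -/
def PRGiven2 (G : Word → PRFun2) : Prop :=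
  ∃ h : Word → ℕ, Computable h ∧
    ∀ (p : Word) (x : ℕ × ℕ), (G p).val x = phi (h p) (Nat.pair x.1 x.2)

/-- `U : {0,1}* → PR(ℕ²→ℕ)` is a strongly universal enumeration: it is itself
partial-recursively given, and for some total recursive `comp` the family of the maps
`p ↦ U (comp e p)` enumerates exactly the partial-recursively given maps, where
`|comp e p| ≤ |p| + c(e)`. -/
def StronglyUniversal2 (U : Word → PRFun2) : Prop :=
  PRGiven2 U ∧
    ∃ comp : Word → Word → Word, Computable₂ comp ∧
      (Set.range fun (e : Word) (p : Word) => U (comp e p)) = {G : Word → PRFun2 | PRGiven2 G} ∧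
      (∀ e : Word, ∃ c : ℕ, ∀ p : Word, (comp e p).length ≤ p.length + c)

/-- The field of a binary relation on `ℕ`: the integers occurring in related pairs. -/
def FldR (r : ℕ → ℕ → Prop) : Set ℕ := {x : ℕ | ∃ y : ℕ, r x y ∨ r y x}

/-- The preorder generated by `r` : its reflexive–transitive closure. -/
def PreR (r : ℕ → ℕ → Prop) : ℕ → ℕ → Prop := Relation.ReflTransGen r

/-- The elements of the quotient order associated to `r` : the classes, in the field
of `r`, of the equivalence `x ∼ y ↔ x ⪯ y ∧ y ⪯ x`. -/
def ClassesR (r : ℕ → ℕ → Prop) : Set (Set ℕ) :=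
  {S : Set ℕ | ∃ x ∈ FldR r, S = {y ∈ FldR r | PreR r x y ∧ PreR r y x}}

/-- The quotient order associated to `r` is a finite linear order with exactly `n`
elements (the quotient of a preorder is linear iff the preorder is total). -/
def QuotLinCard (r : ℕ → ℕ → Prop) (n : ℕ) : Prop :=
  (∀ x ∈ FldR r, ∀ y ∈ FldR r, PreR r x y ∨ PreR r y x) ∧
    (ClassesR r).Finite ∧ (ClassesR r).ncard = n

/-- The domain of `f : ℕ² ⇀ ℕ`, viewed as a binary relation on `ℕ`. -/
def relOf (f : ℕ × ℕ →. ℕ) (x y : ℕ) : Prop := (f (x, y)).Dom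

/-- The ordinal Kolmogorov complexity: `K_ord(n)` is the least length of a program
`p` such that the quotient order associated to `U p` is a finite linear order
with exactly `n` elements. -/
noncomputable def Kord (U : Word → PRFun2) (n : ℕ) : ℕ :=
  sInf {k : ℕ | ∃ p : Word, p.length = k ∧ QuotLinCard (relOf (U p).val) n}

/-- The halting problem `{e : φ_e(e) converges}`. -/
def halting : Set ℕ := {e : ℕ | (phi e e).Dom}

open Classical in
/-- The characteristic function of a set of integers, as an oracle. -/
noncomputable def chi (A : Set ℕ) : ℕ →. ℕ :=
  fun n => Part.some (if n ∈ A then 1 else 0)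

/-- `V : {0,1}* × ℕ ⇀ ℕ` is a strongly universal function partial recursive in `A` :
it is partial recursive in `A`, and for some `comp` recursive in `A` (in particular,
`comp` may be any recursive function) the family of the functions
`(p, t) ↦ V (comp e p) t` enumerates exactly the functions partial recursive in `A`,
where `|comp e p| ≤ |p| + c(e)`. -/
def StronglyUniversal₂In (A : Set ℕ) (V : Word → ℕ →. ℕ) : Prop :=
  RecursiveIn₂ {chi A} V ∧
    ∃ comp : Word → Word → Word, ComputableIn₂ {chi A} comp ∧
      (Set.range fun (e : Word) (p : Word) => V (comp e p)) =
        {W : Word → ℕ →. ℕ | RecursiveIn₂ {chi A} W} ∧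
      (∀ e : Word, ∃ c : ℕ, ∀ p : Word, (comp e p).length ≤ p.length + c)

/-- Complexity for possibly infinite computations with unary output: convergence of
`V p t` is read as `program p emits a symbol 1 at step t`, and the value at `n` is the
least length of a program which emits exactly `n` symbols. -/
noncomputable def KInfOf (V : Word → ℕ →. ℕ) (n : ℕ) : ℕ :=
  sInf {k : ℕ | ∃ p : Word, p.length = k ∧
    {t : ℕ | (V p t).Dom}.Finite ∧ {t : ℕ | (V p t).Dom}.ncard = n}

section Semidecidability

variable {α β : Type*} [Primcodable α] [Primcodable β]

/-- The projection of a primitive recursive relation is the domain of a partial recursive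
function. -/
theorem exists_partrec_dom_iff_exists {R : α → β → Prop} (hR : PrimrecRel R) :
    ∃ f : α →. ℕ, Partrec f ∧ ∀ a, (f a).Dom ↔ ∃ b, R a b := by
  classical
  have hd : Primrec₂ (fun (a : α) (n : ℕ) =>
      ((Encodable.decode n : Option β).map fun b => decide (R a b)).getD false) := by
    have h : Primrec fun x : α × ℕ =>
        (Encodable.decode x.2 : Option β).map fun b => decide (R x.1 b) :=
      Primrec.option_map (Primrec.decode.comp Primrec.snd)
        (hR.decide.comp (Primrec.fst.comp Primrec.fst) Primrec.snd)
    exact Primrec.option_getD.comp h (Primrec.const false)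
  refine ⟨_, Partrec.rfind hd.to_comp.partrec₂, fun a => ?_⟩
  rw [Nat.rfind_dom]
  constructor
  · rintro ⟨n, hn, -⟩
    cases hb : (Encodable.decode n : Option β) with
    | none => simp [hb] at hn
    | some b => exact ⟨b, by simpa [hb] using hn⟩
  · rintro ⟨b, hb⟩
    exact ⟨Encodable.encode b, by simp [hb], fun _ => trivial⟩

/-- Every domain of a partial recursive function is many-one reducible to `halting`. -/
theorem exists_computable_mem_halting_iff {f : α →. ℕ} (hf : Partrec f) :
    ∃ i : α → ℕ, Computable i ∧ ∀ a, i a ∈ halting ↔ (f a).Dom := by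
  obtain ⟨c, hc⟩ := Nat.Partrec.Code.exists_code.1 hf
  refine ⟨fun a => Encodable.encode
    (Nat.Partrec.Code.curry (c.comp Nat.Partrec.Code.left) (Encodable.encode a)), ?_, fun a => ?_⟩
  · exact Primrec.to_comp (Primrec.encode.comp
      (Nat.Partrec.Code.primrec₂_curry.comp (Primrec.const _) Primrec.encode))
  · simp [halting, phi, Nat.Partrec.Code.eval_curry, Nat.Partrec.Code.eval, hc]

/-- A difference of two recursively enumerable predicates is the domain of a function which is
partial recursive in the halting problem. -/
theorem exists_recursiveIn_halting_dom_iff {f g : α →. ℕ} (hf : Partrec f) (hg : Partrec g) :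
    ∃ W : α →. ℕ, RecursiveIn {chi halting} W ∧ ∀ a, (W a).Dom ↔ (f a).Dom ∧ ¬ (g a).Dom := by
  obtain ⟨i, hi, hig⟩ := exists_computable_mem_halting_iff hg
  have hk : Partrec fun a => (f a).bind fun _ => Part.some (i a) :=
    hf.bind (hi.comp Computable.fst).partrec.to₂
  have hz : Nat.Partrec fun k => Nat.rfind fun _ => Part.some (decide (k = 0)) := by
    refine Partrec.nat_iff.1 (Partrec.rfind (p := fun k _ => Part.some (decide (k = 0))) ?_)
    exact ((Primrec.eq.comp Primrec.fst (Primrec.const 0)).decide.to_comp).partrec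
  refine ⟨fun a => (f a).bind fun _ => (chi halting (i a)).bind fun k =>
    Nat.rfind fun _ => Part.some (decide (k = 0)), ?_, fun a => ?_⟩
  · refine ((Nat.RecursiveIn.comp hz.recursiveIn (Nat.RecursiveIn.comp
      (Nat.RecursiveIn.oracle (O := {chi halting}) _ rfl) (Nat.Partrec.recursiveIn hk)))).of_eq
      fun n => ?_
    have aux (q r : ℕ → Part ℕ) : ((((Encodable.decode n : Option α) : Part α).bind fun a =>
        ((f a).bind fun _ => Part.some (i a)).map Encodable.encode).bind q).bind r =
        ((Encodable.decode n : Option α) : Part α).bind fun a =>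
          ((f a).bind fun _ => (q (i a)).bind r).map Encodable.encode := by
      cases (Encodable.decode n : Option α) with
      | none => simp
      | some a => simp [Part.bind_assoc, Part.map_id']
    exact aux (chi halting) _
  · have hr (b : Bool) : (Nat.rfind fun _ => Part.some b).Dom ↔ b = true :=
      Nat.rfind_dom.trans (by simp)
    by_cases h : (g a).Dom <;> simp [chi, hig, h, hr]

end Semidecidability

section Sigma2

variable {α β : Type*} [Primcodable α] [Primcodable β]

/-- A predicate is `Σ₂` if it is of the form `∃ a, ∀ b, R x a b` with `R` primitive recursive. -/
def IsSigma2 (S : α → Prop) : Prop :=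
  ∃ R : α → ℕ → ℕ → Prop, PrimrecPred (fun x : α × ℕ × ℕ => R x.1 x.2.1 x.2.2) ∧
    ∀ x, S x ↔ ∃ a, ∀ b, R x a b

theorem IsSigma2.of_iff {S T : α → Prop} (hS : IsSigma2 S) (h : ∀ x, T x ↔ S x) : IsSigma2 T := by
  obtain ⟨R, hR, hRS⟩ := hS
  exact ⟨R, hR, fun x => (h x).trans (hRS x)⟩

theorem PrimrecPred.isSigma2 {S : α → Prop} (hS : PrimrecPred S) : IsSigma2 S :=
  ⟨fun x _ _ => S x, hS.comp Primrec.fst, fun x => by simp⟩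

theorem IsSigma2.comp {S : β → Prop} (hS : IsSigma2 S) {f : α → β} (hf : Primrec f) :
    IsSigma2 fun x => S (f x) := by
  obtain ⟨R, hR, hRS⟩ := hS
  exact ⟨fun x => R (f x), hR.comp (Primrec.pair (hf.comp Primrec.fst) Primrec.snd),
    fun x => hRS (f x)⟩

theorem IsSigma2.and {S T : α → Prop} (hS : IsSigma2 S) (hT : IsSigma2 T) :
    IsSigma2 fun x => S x ∧ T x := by
  obtain ⟨R, hR, hRS⟩ := hS
  obtain ⟨Q, hQ, hQT⟩ := hT
  have ha : Primrec fun x : α × ℕ × ℕ => x.2.1.unpair :=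
    Primrec.unpair.comp (Primrec.fst.comp Primrec.snd)
  refine ⟨fun x a b => R x a.unpair.1 b ∧ Q x a.unpair.2 b, PrimrecPred.and ?_ ?_, fun x => ?_⟩
  · exact hR.comp (Primrec.pair Primrec.fst
      (Primrec.pair (Primrec.fst.comp ha) (Primrec.snd.comp Primrec.snd)))
  · exact hQ.comp (Primrec.pair Primrec.fst
      (Primrec.pair (Primrec.snd.comp ha) (Primrec.snd.comp Primrec.snd)))
  · simp only [hRS, hQT]
    constructor
    · rintro ⟨⟨a, ha⟩, ⟨a', ha'⟩⟩
      exact ⟨Nat.pair a a', fun b => by simpa using ⟨ha b, ha' b⟩⟩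
    · rintro ⟨a, ha⟩
      exact ⟨⟨_, fun b => (ha b).1⟩, ⟨_, fun b => (ha b).2⟩⟩

theorem IsSigma2.exists {δ : Type*} [Denumerable δ] {S : α × δ → Prop}
    (hS : IsSigma2 S) : IsSigma2 fun x => ∃ d, S (x, d) := by
  obtain ⟨R, hR, hRS⟩ := hS
  have ha : Primrec fun x : α × ℕ × ℕ => x.2.1.unpair :=
    Primrec.unpair.comp (Primrec.fst.comp Primrec.snd)
  refine ⟨fun x a b => R (x, Denumerable.ofNat δ a.unpair.1) a.unpair.2 b, ?_, fun x => ?_⟩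
  · exact hR.comp (Primrec.pair (Primrec.pair Primrec.fst
      ((Primrec.ofNat δ).comp (Primrec.fst.comp ha)))
      (Primrec.pair (Primrec.snd.comp ha) (Primrec.snd.comp Primrec.snd)))
  · simp only [hRS]
    constructor
    · rintro ⟨d, a, h⟩
      exact ⟨Nat.pair (Encodable.encode d) a, fun b => by simpa using h b⟩
    · rintro ⟨a, h⟩
      exact ⟨_, _, h⟩

/-- Primitive recursive predicates are closed under bounded universal quantification with
parameters. -/
theorem PrimrecPred.forall_lt_param {P : α × ℕ → Prop} (hP : PrimrecPred P) {m : α → ℕ}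
    (hm : Primrec m) : PrimrecPred fun x => ∀ i < m x, P (x, i) :=
  ((PrimrecRel.forall_mem_list (R := fun i x => P (x, i))
    (hP.comp (Primrec.pair Primrec.snd Primrec.fst))).comp
    (Primrec.list_range.comp hm) Primrec.id).of_eq fun x => by simp

theorem PrimrecPred.exists_lt_param {P : α × ℕ → Prop} (hP : PrimrecPred P) {m : α → ℕ}
    (hm : Primrec m) : PrimrecPred fun x => ∃ i < m x, P (x, i) :=
  ((PrimrecRel.exists_mem_list (R := fun i x => P (x, i))
    (hP.comp (Primrec.pair Primrec.snd Primrec.fst))).comp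
    (Primrec.list_range.comp hm) Primrec.id).of_eq fun x => by simp

theorem exists_list_getD_iff {P : ℕ → ℕ → Prop} (n : ℕ) :
    (∀ i < n, ∃ a, P i a) ↔ ∃ l : List ℕ, ∀ i < n, P i (l.getD i 0) := by
  constructor
  · intro h
    choose! c hc using h
    refine ⟨(List.range n).map c, fun i hi => ?_⟩
    simpa [List.getD, hi] using hc i hi
  · rintro ⟨l, h⟩ i hi
    exact ⟨_, h i hi⟩

theorem IsSigma2.forall_lt {S : α × ℕ → Prop} (hS : IsSigma2 S) {m : α → ℕ} (hm : Primrec m) :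
    IsSigma2 fun x => ∀ i < m x, S (x, i) := by
  obtain ⟨R, hR, hRS⟩ := hS
  refine ⟨fun x a b => ∀ i < m x, R (x, i) ((Denumerable.ofNat (List ℕ) a).getD i 0) b, ?_,
    fun x => ?_⟩
  · refine PrimrecPred.forall_lt_param
      (P := fun z : (α × ℕ × ℕ) × ℕ => R (z.1.1, z.2)
        ((Denumerable.ofNat (List ℕ) z.1.2.1).getD z.2 0) z.1.2.2) ?_ (hm.comp Primrec.fst)
    refine hR.comp (Primrec.pair (Primrec.pair (Primrec.fst.comp Primrec.fst) Primrec.snd)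
      (Primrec.pair ?_ (Primrec.snd.comp (Primrec.snd.comp Primrec.fst))))
    exact (Primrec.list_getD 0).comp ((Primrec.ofNat (List ℕ)).comp
      (Primrec.fst.comp (Primrec.snd.comp Primrec.fst))) Primrec.snd
  · simp only [hRS]
    rw [exists_list_getD_iff]
    constructor
    · rintro ⟨l, h⟩
      exact ⟨Encodable.encode l, fun b i hi => by simpa using h i hi b⟩
    · rintro ⟨a, h⟩
      exact ⟨_, fun i hi b => h b i hi⟩

end Sigma2

section OracleGraph

theorem mem_nat_rec_part_iff {f : Part ℕ} {h : ℕ → ℕ → Part ℕ} (n y : ℕ) :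
    (y ∈ (n.rec f fun k IH => IH.bind (h k) : Part ℕ)) ↔
      ∃ l : List ℕ, (l.getD 0 0 ∈ f ∧ l.getD n 0 = y) ∧
        ∀ i < n, l.getD (i + 1) 0 ∈ h i (l.getD i 0) := by
  constructor
  · intro hy
    have key : ∃ c : ℕ → ℕ, (c 0 ∈ f ∧ c n = y) ∧ ∀ i < n, c (i + 1) ∈ h i (c i) := by
      induction n generalizing y with
      | zero => exact ⟨fun _ => y, ⟨hy, rfl⟩, by simp⟩
      | succ n ih =>
        obtain ⟨z, hz, hyz⟩ := Part.mem_bind_iff.1 hy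
        obtain ⟨c, ⟨hc0, hcn⟩, hc⟩ := ih z hz
        refine ⟨fun i => if i ≤ n then c i else y, ⟨by simpa using hc0, by simp⟩, fun i hi => ?_⟩
        rcases Nat.lt_succ_iff_lt_or_eq.1 hi with hi | rfl
        · simpa [hi.le, Nat.succ_le_of_lt hi] using hc i hi
        · simpa [hcn] using hyz
    obtain ⟨c, ⟨hc0, hcn⟩, hc⟩ := key
    have hl (i : ℕ) (hi : i ≤ n) : ((List.range (n + 1)).map c).getD i 0 = c i := by
      simp [List.getD, Nat.lt_succ_of_le hi]
    refine ⟨(List.range (n + 1)).map c, ⟨?_, ?_⟩, fun i hi => ?_⟩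
    · rwa [hl 0 (Nat.zero_le n)]
    · rwa [hl n le_rfl]
    · rw [hl i hi.le, hl (i + 1) hi]
      exact hc i hi
  · rintro ⟨l, ⟨h0, rfl⟩, hs⟩
    induction n with
    | zero => exact h0
    | succ n ih =>
      exact Part.mem_bind_iff.2
        ⟨_, ih fun i hi => hs i (hi.trans n.lt_succ_self), hs n n.lt_succ_self⟩

theorem mem_rfind_map_eq_zero_iff {g : ℕ → Part ℕ} {y : ℕ} :
    (y ∈ Nat.rfind fun n => (fun m => decide (m = 0)) <$> g n) ↔
      0 ∈ g y ∧ ∀ m < y, ∃ k, k + 1 ∈ g m := by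
  refine Nat.mem_rfind.trans ?_
  simp only [Part.map_eq_map, Part.mem_map_iff, decide_eq_true_eq, decide_eq_false_iff_not]
  refine and_congr (by simp) (forall₂_congr fun m _ => ⟨?_, ?_⟩)
  · rintro ⟨k, hk, h0⟩
    obtain ⟨j, rfl⟩ := Nat.exists_eq_succ_of_ne_zero h0
    exact ⟨j, hk⟩
  · rintro ⟨k, hk⟩
    exact ⟨_, hk, k.succ_ne_zero⟩

open Nat.Partrec in
theorem primrec_evaln_isSome {γ : Type*} [Primcodable γ] {s e n : γ → ℕ} (hs : Primrec s)
    (he : Primrec e) (hn : Primrec n) :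
    PrimrecPred fun x => (Code.evaln (s x) (Denumerable.ofNat Code (e x)) (n x)).isSome = true :=
  Primrec.eq.comp (Primrec.option_isSome.comp (Code.primrec_evaln.comp
    (Primrec.pair (Primrec.pair hs ((Primrec.ofNat Code).comp he)) hn))) (Primrec.const true)

open Nat.Partrec in
theorem phi_dom_iff (e n : ℕ) :
    (phi e n).Dom ↔ ∃ s, (Code.evaln s (Denumerable.ofNat Code e) n).isSome = true := by
  simp only [phi, Part.dom_iff_mem, Code.evaln_complete, Option.isSome_iff_exists, Option.mem_def]
  exact exists_comm

open Nat.Partrec in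
theorem isSigma2_graph_chi_halting :
    IsSigma2 fun z : ℕ × ℕ => z.2 ∈ chi halting z.1 := by
  have hiff (n : ℕ) : n ∈ halting ↔
      ∃ s, (Code.evaln s (Denumerable.ofNat Code n) n).isSome = true := phi_dom_iff n n
  have hn : Primrec fun x : (ℕ × ℕ) × ℕ × ℕ => x.1.1 := Primrec.fst.comp Primrec.fst
  have hy : Primrec fun x : (ℕ × ℕ) × ℕ × ℕ => x.1.2 := Primrec.snd.comp Primrec.fst
  refine ⟨fun z a b =>
    (z.2 = 1 ∧ (Code.evaln a (Denumerable.ofNat Code z.1) z.1).isSome = true) ∨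
    (z.2 = 0 ∧ ¬ (Code.evaln b (Denumerable.ofNat Code z.1) z.1).isSome = true), ?_, ?_⟩
  · refine PrimrecPred.or (PrimrecPred.and (Primrec.eq.comp hy (Primrec.const 1)) ?_)
      (PrimrecPred.and (Primrec.eq.comp hy (Primrec.const 0)) (PrimrecPred.not ?_))
    · exact primrec_evaln_isSome (Primrec.fst.comp Primrec.snd) hn hn
    · exact primrec_evaln_isSome (Primrec.snd.comp Primrec.snd) hn hn
  · rintro ⟨n, y⟩
    by_cases hmem : n ∈ halting
    · obtain ⟨s, hs⟩ := (hiff n).1 hmem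
      simp only [chi, hmem, if_true, Part.mem_some_iff]
      constructor
      · rintro rfl
        exact ⟨s, fun _ => Or.inl ⟨rfl, hs⟩⟩
      · rintro ⟨a, ha⟩
        rcases ha s with h | h
        · exact h.1
        · exact absurd hs h.2
    · have hs := fun s h => hmem ((hiff n).2 ⟨s, h⟩)
      simp only [chi, hmem, if_false, Part.mem_some_iff]
      constructor
      · rintro rfl
        exact ⟨0, fun b => Or.inr ⟨rfl, hs b⟩⟩
      · rintro ⟨a, ha⟩
        rcases ha 0 with h | h
        · exact absurd h.2 (hs a)
        · exact h.1

/-- The graph of a function partial recursive in the halting problem is `Σ₂`. -/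
theorem isSigma2_graph_of_recursiveIn {f : ℕ →. ℕ} (hf : Nat.RecursiveIn {chi halting} f) :
    IsSigma2 fun z : ℕ × ℕ => z.2 ∈ f z.1 := by
  induction hf with
  | zero =>
    exact (PrimrecPred.isSigma2 (Primrec.eq.comp Primrec.snd (Primrec.const 0))).of_iff
      fun z => Part.mem_some_iff
  | succ =>
    exact (PrimrecPred.isSigma2 (Primrec.eq.comp Primrec.snd
      (Primrec.succ.comp Primrec.fst))).of_iff fun z => Part.mem_some_iff
  | left =>
    exact (PrimrecPred.isSigma2 (Primrec.eq.comp Primrec.snd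
      (Primrec.fst.comp (Primrec.unpair.comp Primrec.fst)))).of_iff fun z => Part.mem_some_iff
  | right =>
    exact (PrimrecPred.isSigma2 (Primrec.eq.comp Primrec.snd
      (Primrec.snd.comp (Primrec.unpair.comp Primrec.fst)))).of_iff fun z => Part.mem_some_iff
  | oracle g hg =>
    rw [Set.mem_singleton_iff.1 hg]
    exact isSigma2_graph_chi_halting
  | pair _ _ ihf ihh =>
    have hy : Primrec fun z : ℕ × ℕ => z.2.unpair := Primrec.unpair.comp Primrec.snd
    refine ((ihf.comp (Primrec.pair Primrec.fst (Primrec.fst.comp hy))).and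
      (ihh.comp (Primrec.pair Primrec.fst (Primrec.snd.comp hy)))).of_iff fun z => ?_
    simp only [Seq.seq, Part.map_eq_map, Part.mem_bind_iff, Part.mem_map_iff]
    constructor
    · rintro ⟨_, ⟨a, ha, rfl⟩, b, hb, hz⟩
      rw [← hz]
      simpa using ⟨ha, hb⟩
    · rintro ⟨ha, hb⟩
      exact ⟨_, ⟨_, ha, rfl⟩, _, hb, Nat.pair_unpair _⟩
  | comp _ _ ihf ihh =>
    refine (IsSigma2.exists (δ := ℕ)
      ((ihh.comp (f := fun x : (ℕ × ℕ) × ℕ => (x.1.1, x.2)) ?_).and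
      (ihf.comp (f := fun x : (ℕ × ℕ) × ℕ => (x.2, x.1.2)) ?_))).of_iff
      fun z => Part.mem_bind_iff
    · exact Primrec.pair (Primrec.fst.comp Primrec.fst) Primrec.snd
    · exact Primrec.pair Primrec.snd (Primrec.snd.comp Primrec.fst)
  | @prec f h _ _ ihf ihh =>
    have ha : Primrec fun x : (ℕ × ℕ) × List ℕ => x.1.1.unpair.1 :=
      Primrec.fst.comp (Primrec.unpair.comp (Primrec.fst.comp Primrec.fst))
    have hn : Primrec fun x : (ℕ × ℕ) × List ℕ => x.1.1.unpair.2 :=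
      Primrec.snd.comp (Primrec.unpair.comp (Primrec.fst.comp Primrec.fst))
    have hget {γ : Type} [Primcodable γ] {u : γ → List ℕ} {v : γ → ℕ} (hu : Primrec u)
        (hv : Primrec v) : Primrec fun x => (u x).getD (v x) 0 := (Primrec.list_getD 0).comp hu hv
    have h0 : IsSigma2 fun x : (ℕ × ℕ) × List ℕ => x.2.getD 0 0 ∈ f x.1.1.unpair.1 :=
      ihf.comp (Primrec.pair ha (hget Primrec.snd (Primrec.const 0)))
    have h1 : IsSigma2 fun x : (ℕ × ℕ) × List ℕ => x.2.getD x.1.1.unpair.2 0 = x.1.2 :=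
      PrimrecPred.isSigma2 (Primrec.eq.comp (hget Primrec.snd hn)
        (Primrec.snd.comp Primrec.fst))
    have h2 : IsSigma2 fun x : ((ℕ × ℕ) × List ℕ) × ℕ => x.1.2.getD (x.2 + 1) 0 ∈
        h (Nat.pair x.1.1.1.unpair.1 (Nat.pair x.2 (x.1.2.getD x.2 0))) := by
      refine ihh.comp (f := fun x : ((ℕ × ℕ) × List ℕ) × ℕ => (Nat.pair x.1.1.1.unpair.1
        (Nat.pair x.2 (x.1.2.getD x.2 0)), x.1.2.getD (x.2 + 1) 0)) (Primrec.pair ?_ ?_)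
      · exact Primrec₂.natPair.comp (ha.comp Primrec.fst) (Primrec₂.natPair.comp Primrec.snd
          (hget (Primrec.snd.comp Primrec.fst) Primrec.snd))
      · exact hget (Primrec.snd.comp Primrec.fst) (Primrec.succ.comp Primrec.snd)
    exact (IsSigma2.exists (δ := List ℕ) ((h0.and h1).and (h2.forall_lt hn))).of_iff
      fun z => mem_nat_rec_part_iff (h := fun k i => h (Nat.pair z.1.unpair.1 (Nat.pair k i))) _ _
  | @rfind f _ ihf =>
    have h0 : IsSigma2 fun z : ℕ × ℕ => 0 ∈ f (Nat.pair z.1 z.2) :=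
      ihf.comp (Primrec.pair (Primrec₂.natPair.comp Primrec.fst Primrec.snd) (Primrec.const 0))
    have h1 : IsSigma2 fun x : ((ℕ × ℕ) × ℕ) × ℕ => x.2 + 1 ∈ f (Nat.pair x.1.1.1 x.1.2) := by
      refine ihf.comp (f := fun x : ((ℕ × ℕ) × ℕ) × ℕ => (Nat.pair x.1.1.1 x.1.2, x.2 + 1))
        (Primrec.pair ?_ (Primrec.succ.comp Primrec.snd))
      exact Primrec₂.natPair.comp (Primrec.fst.comp (Primrec.fst.comp Primrec.fst))
        (Primrec.snd.comp Primrec.fst)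
    exact (h0.and (h1.exists.forall_lt Primrec.snd)).of_iff fun z =>
      mem_rfind_map_eq_zero_iff (g := fun n => f (Nat.pair z.1 n))

/-- The domain of a function partial recursive in the halting problem is `Σ₂`. -/
theorem RecursiveIn.isSigma2_dom {α : Type*} [Primcodable α] {f : α →. ℕ}
    (hf : RecursiveIn {chi halting} f) : IsSigma2 fun a => (f a).Dom := by
  refine (IsSigma2.exists (δ := ℕ) ((isSigma2_graph_of_recursiveIn hf).comp
    (f := fun x : α × ℕ => (Encodable.encode x.1, x.2))
    (Primrec.pair (Primrec.encode.comp Primrec.fst) Primrec.snd))).of_iff fun a => ?_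
  simp [Part.dom_iff_mem]

/-- A `Σ₂` family of sets is in bijection with a `Π₁` family: one may require the witness of
the existential quantifier to be unique. -/
theorem IsSigma2.exists_bijOn {α : Type*} [Primcodable α] {S : α × ℕ → Prop} (hS : IsSigma2 S) :
    ∃ N : α → ℕ → ℕ → Prop, PrimrecPred (fun x : α × ℕ × ℕ => N x.1 x.2.1 x.2.2) ∧
      ∀ p, Set.BijOn (fun x => x.unpair.1) {x | ∀ b, N p x b} {t | S (p, t)} := by
  obtain ⟨R, hR, hRS⟩ := hS
  let D (p : α) (t a s : ℕ) : Prop := ∀ a' < a, ∃ c < s, ¬ R (p, t) a' c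
  have hD : PrimrecPred fun x : α × ℕ × ℕ × ℕ => D x.1 x.2.1 x.2.2.1 x.2.2.2 := by
    refine PrimrecPred.forall_lt_param (α := α × ℕ × ℕ × ℕ)
      (P := fun y => ∃ c < y.1.2.2.2, ¬ R (y.1.1, y.1.2.1) y.2 c) ?_
      (Primrec.fst.comp (Primrec.snd.comp Primrec.snd))
    refine PrimrecPred.exists_lt_param (α := (α × ℕ × ℕ × ℕ) × ℕ)
      (P := fun y => ¬ R (y.1.1.1, y.1.1.2.1) y.1.2 y.2) (PrimrecPred.not ?_)
      (Primrec.snd.comp (Primrec.snd.comp (Primrec.snd.comp Primrec.fst)))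
    exact hR.comp (Primrec.pair (Primrec.pair (Primrec.fst.comp (Primrec.fst.comp Primrec.fst))
      (Primrec.fst.comp (Primrec.snd.comp (Primrec.fst.comp Primrec.fst))))
      (Primrec.pair (Primrec.snd.comp Primrec.fst) Primrec.snd))
  let N (p : α) (x b : ℕ) : Prop := R (p, x.unpair.1) x.unpair.2.unpair.1 b ∧
    D p x.unpair.1 x.unpair.2.unpair.1 x.unpair.2.unpair.2 ∧
    ∀ s < x.unpair.2.unpair.2, ¬ D p x.unpair.1 x.unpair.2.unpair.1 s
  refine ⟨N, ?_, fun p => ⟨?_, ?_, ?_⟩⟩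
  · have ht : Primrec fun x : α × ℕ × ℕ => x.2.1.unpair :=
      Primrec.unpair.comp (Primrec.fst.comp Primrec.snd)
    have has : Primrec fun x : α × ℕ × ℕ => x.2.1.unpair.2.unpair :=
      Primrec.unpair.comp (Primrec.snd.comp ht)
    refine PrimrecPred.and ?_ (PrimrecPred.and ?_ ?_)
    · exact hR.comp (Primrec.pair (Primrec.pair Primrec.fst (Primrec.fst.comp ht))
        (Primrec.pair (Primrec.fst.comp has) (Primrec.snd.comp Primrec.snd)))
    · exact hD.comp (Primrec.pair Primrec.fst (Primrec.pair (Primrec.fst.comp ht) has))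
    · refine PrimrecPred.forall_lt_param (α := α × ℕ × ℕ)
        (P := fun y => ¬ D y.1.1 y.1.2.1.unpair.1 y.1.2.1.unpair.2.unpair.1 y.2)
        (PrimrecPred.not ?_) (Primrec.snd.comp has)
      exact hD.comp (Primrec.pair (Primrec.fst.comp Primrec.fst)
        (Primrec.pair (Primrec.fst.comp (ht.comp Primrec.fst))
          (Primrec.pair (Primrec.fst.comp (has.comp Primrec.fst)) Primrec.snd)))
  · exact fun x hx => (hRS _).2 ⟨_, fun b => (hx b).1⟩
  · intro x hx y hy hxy
    have hle {x y : ℕ} (hx : ∀ b, N p x b) (hy : ∀ b, N p y b) (hxy : x.unpair.1 = y.unpair.1) :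
        x.unpair.2.unpair.1 ≤ y.unpair.2.unpair.1 := by
      by_contra! hlt
      obtain ⟨c, -, hc⟩ := (hx 0).2.1 _ hlt
      exact hc (hxy ▸ (hy c).1)
    have ha := le_antisymm (hle hx hy hxy) (hle hy hx hxy.symm)
    have hs {x y : ℕ} (hx : ∀ b, N p x b) (hy : ∀ b, N p y b) (hxy : x.unpair.1 = y.unpair.1)
        (ha : x.unpair.2.unpair.1 = y.unpair.2.unpair.1) :
        x.unpair.2.unpair.2 ≤ y.unpair.2.unpair.2 := by
      by_contra! hlt
      refine (hx 0).2.2 _ hlt ?_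
      rw [hxy, ha]
      exact (hy 0).2.1
    have hss := le_antisymm (hs hx hy hxy ha) (hs hy hx hxy.symm ha.symm)
    have h2 : x.unpair.2 = y.unpair.2 := by
      rw [← Nat.pair_unpair x.unpair.2, ← Nat.pair_unpair y.unpair.2, ha, hss]
    rw [← Nat.pair_unpair x, ← Nat.pair_unpair y, h2]
    exact congrArg (Nat.pair · _) hxy
  · intro t ht
    classical
    have hex := (hRS (p, t)).1 ht
    have hDex : ∃ s, D p t (Nat.find hex) s := by
      have h (a : ℕ) (ha : a < Nat.find hex) : ∃ c, ¬ R (p, t) a c := by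
        simpa using Nat.find_min hex ha
      choose! c hc using h
      refine ⟨(Finset.range (Nat.find hex)).sup c + 1, fun a ha => ⟨c a, ?_, hc a ha⟩⟩
      exact Nat.lt_succ_of_le (Finset.le_sup (Finset.mem_range.2 ha))
    refine ⟨Nat.pair t (Nat.pair (Nat.find hex) (Nat.find hDex)), fun b => ?_, by simp⟩
    simp only [N, Nat.unpair_pair]
    exact ⟨Nat.find_spec hex b, Nat.find_spec hDex, fun s hs => Nat.find_min hDex hs⟩

end OracleGraph

section QuotientOrder

/-- The least representatives of the classes of the quotient order associated to `r`. -/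
def leastReps (r : ℕ → ℕ → Prop) : Set ℕ :=
  {x ∈ FldR r | ∀ y < x, ¬ (PreR r x y ∧ PreR r y x)}

theorem PreR.mem_FldR {r : ℕ → ℕ → Prop} {x y : ℕ} (h : PreR r x y) (hx : x ∈ FldR r) :
    y ∈ FldR r := by
  rcases Relation.ReflTransGen.cases_tail h with rfl | ⟨z, -, hz⟩
  · exact hx
  · exact ⟨z, Or.inr hz⟩

theorem leastReps_bijOn_ClassesR (r : ℕ → ℕ → Prop) :
    Set.BijOn (fun x => {y ∈ FldR r | PreR r x y ∧ PreR r y x}) (leastReps r) (ClassesR r) := by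
  refine ⟨fun x hx => ⟨x, hx.1, rfl⟩, ?_, ?_⟩
  · intro x hx y hy (hxy : {z ∈ FldR r | _} = {z ∈ FldR r | _})
    have h : x ∈ {z ∈ FldR r | PreR r y z ∧ PreR r z y} :=
      hxy ▸ ⟨hx.1, Relation.ReflTransGen.refl, Relation.ReflTransGen.refl⟩
    rcases lt_trichotomy x y with hlt | heq | hlt
    · exact absurd h.2 (hy.2 x hlt)
    · exact heq
    · exact absurd h.2.symm (hx.2 y hlt)
  · rintro _ ⟨x, hx, rfl⟩
    classical
    have hex : ∃ y, PreR r x y ∧ PreR r y x :=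
      ⟨x, Relation.ReflTransGen.refl, Relation.ReflTransGen.refl⟩
    obtain ⟨h1, h2⟩ := Nat.find_spec hex
    refine ⟨Nat.find hex, ⟨h1.mem_FldR hx, fun y hy h => ?_⟩, ?_⟩
    · exact Nat.find_min hex hy ⟨h1.trans h.1, h.2.trans h2⟩
    · ext y
      exact and_congr_right fun _ =>
        ⟨fun h => ⟨h1.trans h.1, h.2.trans h2⟩, fun h => ⟨h2.trans h.1, h.2.trans h1⟩⟩

open Nat.Partrec in
/-- One step of following a path of the domain of the function with Gödel number `e`: move from
the current vertex to `z.1` if convergence there is seen within `z.2` steps. -/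
def pathStep (e : ℕ) (o : Option ℕ) (z : ℕ × ℕ) : Option ℕ :=
  o.bind fun w => if (Code.evaln z.2 (Denumerable.ofNat Code e) (Nat.pair w z.1)).isSome = true
    then some z.1 else none

theorem primrec_foldl_pathStep {γ : Type*} [Primcodable γ] {e x : γ → ℕ} {l : γ → List (ℕ × ℕ)}
    (he : Primrec e) (hx : Primrec x) (hl : Primrec l) :
    Primrec fun a => (l a).foldl (pathStep (e a)) (some (x a)) := by
  refine Primrec.list_foldl (h := fun a z => pathStep (e a) z.1 z.2) hl
    (Primrec.option_some.comp hx) ?_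
  have hz : Primrec fun u : (γ × Option ℕ × ℕ × ℕ) × ℕ => u.1.2.2 :=
    Primrec.snd.comp (Primrec.snd.comp Primrec.fst)
  refine Primrec.option_bind (f := fun u : γ × Option ℕ × ℕ × ℕ => u.2.1)
    (Primrec.fst.comp Primrec.snd) (Primrec.ite ?_ ?_ (Primrec.const none))
  · exact primrec_evaln_isSome (Primrec.snd.comp hz)
      (he.comp (Primrec.fst.comp Primrec.fst))
      (Primrec₂.natPair.comp Primrec.snd (Primrec.fst.comp hz))
  · exact Primrec.option_some.comp (Primrec.fst.comp hz)

theorem PreR_phi_iff (e x y : ℕ) : PreR (fun x y => (phi e (Nat.pair x y)).Dom) x y ↔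
    ∃ l : List (ℕ × ℕ), l.foldl (pathStep e) (some x) = some y := by
  constructor
  · intro h
    induction h with
    | refl => exact ⟨[], rfl⟩
    | @tail z w _ hzw ih =>
      obtain ⟨l, hl⟩ := ih
      obtain ⟨s, hs⟩ := (phi_dom_iff _ _).1 hzw
      exact ⟨l ++ [(w, s)], by simp [hl, pathStep, hs]⟩
  · rintro ⟨l, hl⟩
    induction l using List.reverseRecOn generalizing y with
    | nil =>
      obtain rfl : x = y := by simpa using hl
      exact Relation.ReflTransGen.refl
    | append_singleton l z ih =>
      rw [List.foldl_append, List.foldl_cons, List.foldl_nil, pathStep,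
        Option.bind_eq_some_iff] at hl
      obtain ⟨w, hw, hwz⟩ := hl
      split_ifs at hwz with hs
      obtain rfl : z.1 = y := by simpa using hwz
      exact (ih w hw).tail ((phi_dom_iff _ _).2 ⟨_, hs⟩)

/-- The least representatives of the classes of the domain of a partial recursive function
form, uniformly, the domain of a function partial recursive in the halting problem. -/
theorem PRGiven2.exists_recursiveIn_leastReps {G : Word → PRFun2} (hG : PRGiven2 G) :
    ∃ W : Word → ℕ →. ℕ, RecursiveIn₂ {chi halting} W ∧
      ∀ p, {t | (W p t).Dom} = leastReps (relOf (G p).val) := by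
  obtain ⟨h, hh, hGh⟩ := hG
  let r (e x y : ℕ) : Prop := (phi e (Nat.pair x y)).Dom
  have hrel (p : Word) : relOf (G p).val = r (h p) := by
    funext x y
    simp only [relOf, hGh, r]
  have hfld : ∃ f : ℕ × ℕ →. ℕ, Partrec f ∧ ∀ a, (f a).Dom ↔ a.2 ∈ FldR (r a.1) := by
    obtain ⟨f, hf, hfd⟩ := exists_partrec_dom_iff_exists (α := ℕ × ℕ) (β := ℕ × ℕ)
      (R := fun a b =>
        (Nat.Partrec.Code.evaln b.2 (Denumerable.ofNat _ a.1) (Nat.pair a.2 b.1)).isSome = true ∨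
        (Nat.Partrec.Code.evaln b.2 (Denumerable.ofNat _ a.1) (Nat.pair b.1 a.2)).isSome = true)
      (by
        have he : Primrec fun z : (ℕ × ℕ) × ℕ × ℕ => z.1.1 := Primrec.fst.comp Primrec.fst
        have ht : Primrec fun z : (ℕ × ℕ) × ℕ × ℕ => z.1.2 := Primrec.snd.comp Primrec.fst
        have hy : Primrec fun z : (ℕ × ℕ) × ℕ × ℕ => z.2.1 := Primrec.fst.comp Primrec.snd
        have hs : Primrec fun z : (ℕ × ℕ) × ℕ × ℕ => z.2.2 := Primrec.snd.comp Primrec.snd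
        exact PrimrecPred.or (primrec_evaln_isSome hs he (Primrec₂.natPair.comp ht hy))
          (primrec_evaln_isSome hs he (Primrec₂.natPair.comp hy ht)))
    refine ⟨f, hf, fun a => (hfd a).trans ?_⟩
    simp only [Prod.exists, exists_or, FldR, Set.mem_ofPred_eq, r, phi_dom_iff]
  have heqv : ∃ g : ℕ × ℕ →. ℕ, Partrec g ∧
      ∀ a, (g a).Dom ↔ ∃ y < a.2, PreR (r a.1) a.2 y ∧ PreR (r a.1) y a.2 := by
    obtain ⟨g, hg, hgd⟩ := exists_partrec_dom_iff_exists (α := ℕ × ℕ)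
      (β := ℕ × List (ℕ × ℕ) × List (ℕ × ℕ))
      (R := fun a b => b.1 < a.2 ∧ b.2.1.foldl (pathStep a.1) (some a.2) = some b.1 ∧
        b.2.2.foldl (pathStep a.1) (some b.1) = some a.2)
      (by
        have he : Primrec fun z : (ℕ × ℕ) × ℕ × List (ℕ × ℕ) × List (ℕ × ℕ) => z.1.1 :=
          Primrec.fst.comp Primrec.fst
        have ht : Primrec fun z : (ℕ × ℕ) × ℕ × List (ℕ × ℕ) × List (ℕ × ℕ) => z.1.2 :=
          Primrec.snd.comp Primrec.fst
        have hy : Primrec fun z : (ℕ × ℕ) × ℕ × List (ℕ × ℕ) × List (ℕ × ℕ) => z.2.1 :=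
          Primrec.fst.comp Primrec.snd
        exact PrimrecPred.and (Primrec.nat_lt.comp hy ht) (PrimrecPred.and
          (Primrec.eq.comp (primrec_foldl_pathStep he ht
            (Primrec.fst.comp (Primrec.snd.comp Primrec.snd))) (Primrec.option_some.comp hy))
          (Primrec.eq.comp (primrec_foldl_pathStep he hy
            (Primrec.snd.comp (Primrec.snd.comp Primrec.snd))) (Primrec.option_some.comp ht))))
    refine ⟨g, hg, fun a => (hgd a).trans ?_⟩
    simp only [r, PreR_phi_iff, Prod.exists, exists_and_left, exists_and_right]
  obtain ⟨f, hf, hfd⟩ := hfld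
  obtain ⟨g, hg, hgd⟩ := heqv
  have hpt : Computable fun a : Word × ℕ => (h a.1, a.2) :=
    Computable.pair (hh.comp Computable.fst) Computable.snd
  obtain ⟨W, hW, hWd⟩ := exists_recursiveIn_halting_dom_iff (hf.comp hpt) (hg.comp hpt)
  refine ⟨fun p t => W (p, t), hW, fun p => ?_⟩
  ext t
  simp only [Set.mem_ofPred_eq, hWd, hfd, hgd, leastReps, hrel]
  simp only [not_exists, not_and]

end QuotientOrder

section CollapsedOrder

/-- The relation which collapses each `z` with `¬ B z` to its successor. -/
def collapseRel (B : ℕ → Prop) (x y : ℕ) : Prop := x ≤ y ∨ x = y + 1 ∧ ¬ B y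

theorem FldR_collapseRel (B : ℕ → Prop) : FldR (collapseRel B) = Set.univ :=
  Set.eq_univ_of_forall fun x => ⟨x, Or.inl (Or.inl le_rfl)⟩

theorem PreR_collapseRel_of_le (B : ℕ → Prop) {x y : ℕ} (h : x ≤ y) : PreR (collapseRel B) x y :=
  Relation.ReflTransGen.single (Or.inl h)

theorem PreR_collapseRel_iff (B : ℕ → Prop) (x y : ℕ) :
    PreR (collapseRel B) x y ↔ ∀ z, y ≤ z → z < x → ¬ B z := by
  constructor
  · intro h
    induction h with
    | refl => intro z h1 h2; omega
    | tail _ hwy ih =>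
      intro z h1 h2
      rcases hwy with hle | ⟨rfl, hB⟩
      · exact ih z (hle.trans h1) h2
      · rcases h1.eq_or_lt with rfl | hlt
        · exact hB
        · exact ih z hlt h2
  · intro h
    induction x with
    | zero => exact PreR_collapseRel_of_le B (Nat.zero_le y)
    | succ x ih =>
      rcases le_or_gt (x + 1) y with hle | hlt
      · exact PreR_collapseRel_of_le B hle
      · exact Relation.ReflTransGen.head (Or.inr ⟨rfl, h x (Nat.lt_succ_iff.1 hlt) x.lt_succ_self⟩)
          (ih fun z h1 h2 => h z h1 (h2.trans x.lt_succ_self))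

theorem leastReps_collapseRel (B : ℕ → Prop) :
    leastReps (collapseRel B) = insert 0 (Nat.succ '' {x | B x}) := by
  ext x
  simp only [leastReps, FldR_collapseRel, Set.mem_univ, true_and, PreR_collapseRel_iff,
    Set.mem_insert_iff, Set.mem_image, Set.mem_ofPred_eq]
  cases x with
  | zero => simp
  | succ x =>
    simp only [Nat.succ_eq_add_one, Nat.add_right_cancel_iff, exists_eq_right]
    constructor
    · intro h
      by_contra hx
      refine h x x.lt_succ_self ⟨fun z h1 h2 => ?_, fun z h1 h2 => by omega⟩
      obtain rfl : z = x := by omega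
      simpa using hx
    · rintro (h | h)
      · omega
      · exact fun y hy hxy => hxy.1 x (Nat.lt_succ_iff.1 hy) x.lt_succ_self h

/-- If `B` has `n ≥ 1` elements, then collapsing along the complement of `B` without its least
element gives a linear order with `n` elements. -/
theorem quotLinCard_collapseRel {B : ℕ → Prop} (hB : {x | B x}.Finite)
    (hne : {x | B x}.Nonempty) :
    QuotLinCard (collapseRel fun x => B x ∧ ∃ y < x, B y) {x | B x}.ncard := by
  classical
  have hset : {x | B x ∧ ∃ y < x, B y} = {x | B x} \ {Nat.find hne} := by
    ext x
    refine and_congr_right fun hx => ⟨?_, fun h => ?_⟩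
    · rintro ⟨y, hyx, hy⟩ rfl
      exact Nat.find_min hne hyx hy
    · exact ⟨_, lt_of_le_of_ne (Nat.find_min' hne hx) (Ne.symm h), Nat.find_spec hne⟩
  have hfin : {x | B x ∧ ∃ y < x, B y}.Finite := hset ▸ hB.sdiff
  have hbij := leastReps_bijOn_ClassesR (collapseRel fun x => B x ∧ ∃ y < x, B y)
  rw [leastReps_collapseRel] at hbij
  refine ⟨fun x _ y _ => (le_total x y).imp (PreR_collapseRel_of_le _)
    (PreR_collapseRel_of_le _), ?_, ?_⟩
  · exact hbij.finite_iff_finite.1 ((hfin.image _).insert 0)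
  · rw [← hbij.image_eq, hbij.injOn.ncard_image,
      Set.ncard_insert_of_notMem (by simp) (hfin.image _),
      Set.ncard_image_of_injective _ Nat.succ_injective, hset,
      Set.ncard_sdiff_singleton_add_one (Nat.find_spec hne) hB]

theorem exists_PRGiven2_of_partrec {f : Word × ℕ × ℕ →. ℕ} (hf : Partrec f) :
    ∃ G : Word → PRFun2, PRGiven2 G ∧ ∀ p x, (G p).val x = f (p, x) := by
  obtain ⟨c, hc⟩ := Nat.Partrec.Code.exists_code.1 hf
  refine ⟨fun p => ⟨fun x => f (p, x), hf.comp (Computable.pair (Computable.const p)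
    Computable.id)⟩, ⟨fun p => Encodable.encode (c.curry (Encodable.encode p)), ?_, ?_⟩,
    fun p x => rfl⟩
  · exact Primrec.to_comp (Primrec.encode.comp
      (Nat.Partrec.Code.primrec₂_curry.comp (Primrec.const _) Primrec.encode))
  · intro p x
    have hx : Nat.pair (Encodable.encode p) (Nat.pair x.1 x.2) = Encodable.encode (p, x) := rfl
    simp only [phi, Denumerable.ofNat_encode, Nat.Partrec.Code.eval_curry, hc, hx,
      Encodable.encodek, Part.coe_some, Part.bind_some]
    exact (Part.map_id' (fun _ => rfl) _).symm

/-- Every `Π₁` family of sets gives rise to a partial recursive family of relations which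
collapses along the complements of these sets without their least elements. -/
theorem exists_PRGiven2_collapseRel {N : Word → ℕ → ℕ → Prop}
    (hN : PrimrecPred fun x : Word × ℕ × ℕ => N x.1 x.2.1 x.2.2) :
    ∃ G : Word → PRFun2, PRGiven2 G ∧ ∀ p, relOf (G p).val =
      collapseRel fun x => (∀ b, N p x b) ∧ ∃ y < x, ∀ b, N p y b := by
  have hC : PrimrecPred fun x : Word × ℕ × ℕ => ∃ b < x.2.2, ¬ N x.1 x.2.1 b := by
    refine PrimrecPred.exists_lt_param (α := Word × ℕ × ℕ) (P := fun y => ¬ N y.1.1 y.1.2.1 y.2)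
      (PrimrecPred.not ?_) (Primrec.snd.comp Primrec.snd)
    exact hN.comp (Primrec.pair (Primrec.fst.comp Primrec.fst)
      (Primrec.pair (Primrec.fst.comp (Primrec.snd.comp Primrec.fst)) Primrec.snd))
  obtain ⟨f, hf, hfd⟩ := exists_partrec_dom_iff_exists (α := Word × ℕ × ℕ) (β := ℕ)
    (R := fun a s => a.2.1 ≤ a.2.2 ∨ a.2.1 = a.2.2 + 1 ∧
      ((∃ b < s, ¬ N a.1 a.2.2 b) ∨ ∀ z < a.2.2, ∃ b < s, ¬ N a.1 z b))
    (by
      have hp : Primrec fun u : (Word × ℕ × ℕ) × ℕ => u.1.1 := Primrec.fst.comp Primrec.fst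
      have hx : Primrec fun u : (Word × ℕ × ℕ) × ℕ => u.1.2.1 :=
        Primrec.fst.comp (Primrec.snd.comp Primrec.fst)
      have hy : Primrec fun u : (Word × ℕ × ℕ) × ℕ => u.1.2.2 :=
        Primrec.snd.comp (Primrec.snd.comp Primrec.fst)
      refine PrimrecPred.or (Primrec.nat_le.comp hx hy) (PrimrecPred.and
        (Primrec.eq.comp hx (Primrec.succ.comp hy)) (PrimrecPred.or ?_ ?_))
      · exact hC.comp (Primrec.pair hp (Primrec.pair hy Primrec.snd))
      · refine PrimrecPred.forall_lt_param (α := (Word × ℕ × ℕ) × ℕ)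
          (P := fun v => ∃ b < v.1.2, ¬ N v.1.1.1 v.2 b) ?_ hy
        exact hC.comp (Primrec.pair (hp.comp Primrec.fst)
          (Primrec.pair Primrec.snd (Primrec.snd.comp Primrec.fst))))
  obtain ⟨G, hG, hGf⟩ := exists_PRGiven2_of_partrec hf
  refine ⟨G, hG, fun p => ?_⟩
  funext x y
  have hstage : (∃ s, (∃ b < s, ¬ N p y b) ∨ ∀ z < y, ∃ b < s, ¬ N p z b) ↔
      ¬ ((∀ b, N p y b) ∧ ∃ z < y, ∀ b, N p z b) := by
    rw [not_and_or, exists_or]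
    push Not
    refine or_congr ⟨fun ⟨s, b, _, hb⟩ => ⟨b, hb⟩, fun ⟨b, hb⟩ => ⟨b + 1, b, b.lt_succ_self, hb⟩⟩
      ⟨fun ⟨s, hs⟩ z hz => (hs z hz).imp fun b hb => hb.2, fun h => ?_⟩
    choose! c hc using h
    exact ⟨(Finset.range y).sup c + 1, fun z hz =>
      ⟨c z, Nat.lt_succ_of_le (Finset.le_sup (Finset.mem_range.2 hz)), hc z hz⟩⟩
  simp only [relOf, hGf, hfd, collapseRel, exists_or, exists_and_left, ← hstage, exists_const]

end CollapsedOrder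

section Comparison

theorem StronglyUniversal2.exists_length_le {U : Word → PRFun2} (hU : StronglyUniversal2 U)
    {G : Word → PRFun2} (hG : PRGiven2 G) :
    ∃ c, ∀ p, ∃ q : Word, U q = G p ∧ q.length ≤ p.length + c := by
  obtain ⟨-, comp, -, hrange, hlen⟩ := hU
  obtain ⟨e, he⟩ : G ∈ Set.range fun (e : Word) (p : Word) => U (comp e p) := hrange ▸ hG
  obtain ⟨c, hc⟩ := hlen e
  exact ⟨c, fun p => ⟨comp e p, congrFun he p, hc p⟩⟩

theorem StronglyUniversal₂In.exists_length_le {A : Set ℕ} {V : Word → ℕ →. ℕ}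
    (hV : StronglyUniversal₂In A V) {W : Word → ℕ →. ℕ} (hW : RecursiveIn₂ {chi A} W) :
    ∃ c, ∀ p, ∃ q : Word, V q = W p ∧ q.length ≤ p.length + c := by
  obtain ⟨-, comp, -, hrange, hlen⟩ := hV
  obtain ⟨e, he⟩ : W ∈ Set.range fun (e : Word) (p : Word) => V (comp e p) := hrange ▸ hW
  obtain ⟨c, hc⟩ := hlen e
  exact ⟨c, fun p => ⟨comp e p, congrFun he p, hc p⟩⟩

/-- Every program for `n` in the sense of `Kord` gives a program for `n` in the sense of
`KInfOf` of at most the same length, up to a constant. -/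
theorem exists_KInf_program_of_Kord_program {U : Word → PRFun2} (hU : PRGiven2 U)
    {V : Word → ℕ →. ℕ} (hV : StronglyUniversal₂In halting V) :
    ∃ c, ∀ (n : ℕ) (p : Word), QuotLinCard (relOf (U p).val) n → ∃ q : Word,
      q.length ≤ p.length + c ∧ {t | (V q t).Dom}.Finite ∧ {t | (V q t).Dom}.ncard = n := by
  obtain ⟨W, hW, hWd⟩ := hU.exists_recursiveIn_leastReps
  obtain ⟨c, hc⟩ := hV.exists_length_le hW
  refine ⟨c, fun n p hp => ?_⟩
  obtain ⟨q, hq, hlen⟩ := hc p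
  have hbij := leastReps_bijOn_ClassesR (relOf (U p).val)
  refine ⟨q, hlen, ?_⟩
  rw [hq, hWd, hbij.finite_iff_finite, ← hbij.injOn.ncard_image, hbij.image_eq]
  exact hp.2

/-- Every program for `n ≠ 0` in the sense of `KInfOf` gives a program for `n` in the sense of
`Kord` of at most the same length, up to a constant. -/
theorem exists_Kord_program_of_KInf_program {U : Word → PRFun2} (hU : StronglyUniversal2 U)
    {V : Word → ℕ →. ℕ} (hV : RecursiveIn₂ {chi halting} V) :
    ∃ c, ∀ (n : ℕ) (p : Word), n ≠ 0 → {t | (V p t).Dom}.Finite → {t | (V p t).Dom}.ncard = n →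
      ∃ q : Word, q.length ≤ p.length + c ∧ QuotLinCard (relOf (U q).val) n := by
  obtain ⟨N, hN, hbij⟩ := (RecursiveIn.isSigma2_dom hV).exists_bijOn
  obtain ⟨G, hG, hGrel⟩ := exists_PRGiven2_collapseRel hN
  obtain ⟨c, hc⟩ := hU.exists_length_le hG
  refine ⟨c, fun n p hn hfin hcard => ?_⟩
  obtain ⟨q, hq, hlen⟩ := hc p
  have hBfin : {x | ∀ b, N p x b}.Finite := (hbij p).finite_iff_finite.2 hfin
  have hBcard : {x | ∀ b, N p x b}.ncard = n := by
    rw [← hcard, ← (hbij p).injOn.ncard_image, (hbij p).image_eq]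
  refine ⟨q, hlen, ?_⟩
  rw [hq, hGrel, ← hBcard]
  exact quotLinCard_collapseRel hBfin (Set.nonempty_of_ncard_ne_zero (hBcard ▸ hn))

/-- Every integer is the number of symbols emitted by some program. -/
theorem StronglyUniversal₂In.exists_program {V : Word → ℕ →. ℕ} {A : Set ℕ}
    (hV : StronglyUniversal₂In A V) (n : ℕ) :
    ∃ p : Word, {t | (V p t).Dom}.Finite ∧ {t | (V p t).Dom}.ncard = n := by
  obtain ⟨f, hf, hfd⟩ := exists_partrec_dom_iff_exists (α := Word × ℕ) (β := ℕ)
    (R := fun a _ => a.2 < a.1.length) (Primrec.nat_lt.comp (Primrec.snd.comp Primrec.fst)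
      (Primrec.list_length.comp (Primrec.fst.comp Primrec.fst)))
  obtain ⟨c, hc⟩ := hV.exists_length_le (W := fun p t => f (p, t)) hf.recursiveIn
  obtain ⟨q, hq, -⟩ := hc (List.replicate n true)
  have hset : {t | (V q t).Dom} = Set.Iio n := by
    ext t
    simp [hq, hfd]
  exact ⟨q, hset ▸ Set.finite_Iio n, by rw [hset, Set.ncard_Iio_nat]⟩

end Comparison

/-- `K_ord =ct K'^∞`, where `K_ord` is computed with any strongly universal enumeration
`U` of the partial recursive functions `ℕ² ⇀ ℕ`, and `K'^∞` with any strongly universal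
function `V` partial recursive in the halting problem. -/
theorem stmt15 (U : Word → PRFun2) (hU : StronglyUniversal2 U)
    (V : Word → ℕ →. ℕ) (hV : StronglyUniversal₂In halting V) :
    EqCt (Kord U) (KInfOf V) := by
  obtain ⟨c₁, hc₁⟩ := exists_KInf_program_of_Kord_program hU.1 hV
  obtain ⟨c₂, hc₂⟩ := exists_Kord_program_of_KInf_program hU hV.1
  have hmem (n : ℕ) : ∃ p : Word, p.length = KInfOf V n ∧
      {t | (V p t).Dom}.Finite ∧ {t | (V p t).Dom}.ncard = n := by
    obtain ⟨p, hp⟩ := hV.exists_program n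
    exact Nat.sInf_mem (s := {k | ∃ p : Word, p.length = k ∧
      {t | (V p t).Dom}.Finite ∧ {t | (V p t).Dom}.ncard = n}) ⟨_, p, rfl, hp⟩
  refine ⟨c₁ + c₂ + Kord U 0 + KInfOf V 0, fun n => ?_⟩
  rcases eq_or_ne n 0 with rfl | hn
  · rw [abs_le]
    omega
  · obtain ⟨p, hpl, hpfin, hpcard⟩ := hmem n
    obtain ⟨q, hql, hq⟩ := hc₂ n p hn hpfin hpcard
    have h₂ : Kord U n ≤ q.length := Nat.sInf_le ⟨q, rfl, hq⟩
    obtain ⟨p', hpl', hp'⟩ : ∃ p : Word, p.length = Kord U n ∧ QuotLinCard (relOf (U p).val) n :=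
      Nat.sInf_mem (s := {k | ∃ p : Word, p.length = k ∧ QuotLinCard (relOf (U p).val) n})
        ⟨_, q, rfl, hq⟩
    obtain ⟨q', hql', hq'⟩ := hc₁ n p' hp'
    have h₁ : KInfOf V n ≤ q'.length := Nat.sInf_le ⟨q', rfl, hq'⟩
    rw [abs_le]
    omega
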